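/- arXiv:2004.12931 — 2 statements merged into one kernel-verified Lean document; each statement's English description precedes it below -/
import Mathlib

section
/- Let Ω be a Hermitian d×d matrix, A a Hermitian N×N matrix, and B an N×d complex matrix with Null(A) ⊆ Null(B*). Set W = Ω − B*A⁺B, let P be the orthogonal projection onto Null(Ω), let 𝒬 = Null(BPB*) ⊆ ℂ^N, let S be the Hermitian operator obtained by restricting A − BΩ⁺B* to 𝒬 (i.e. Q(A − BΩ⁺B*)Q* viewed as an operator on 𝒬, with Q the orthogonal projection onto 𝒬), and let i_∞(S) := rank(BPB*) = N − dim 𝒬. Then: i_−(W) = i_−(Ω) + i_−(S) + i_∞(S) − i_−(A); i_0(W) = i_0(Ω) + i_0(S) − i_∞(S) − i_0(A); and i_+(W) = i_+(Ω) + i_+(S) + i_∞(S) − i_+(A) = i_+(Ω) − i_−(S) − i_0(S) + i_−(A) + i_0(A). -/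
noncomputable section

open Matrix Complex
open scoped ComplexOrder

/-- Eigenvalues of a square complex matrix, sorted in increasing order
(junk value `0` if the matrix is not Hermitian). -/
noncomputable def sortedEigs {n : ℕ} (A : Matrix (Fin n) (Fin n) ℂ) : Fin n → ℝ :=
  if hA : A.IsHermitian then hA.eigenvalues ∘ Tuple.sort hA.eigenvalues else 0

/-- The Moore–Penrose pseudoinverse of a Hermitian matrix (junk value `0` otherwise). -/
noncomputable def pinvH {m : Type*} [Fintype m] [DecidableEq m] (A : Matrix m m ℂ) :
    Matrix m m ℂ :=
  if hA : A.IsHermitian then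
    (hA.eigenvectorUnitary : Matrix m m ℂ) *
      Matrix.diagonal (fun i => if hA.eigenvalues i = 0 then 0 else ((hA.eigenvalues i : ℂ))⁻¹) *
      star (hA.eigenvectorUnitary : Matrix m m ℂ)
  else 0

/-- The orthogonal projection onto the null space of a Hermitian matrix. -/
noncomputable def nullProj {m : Type*} [Fintype m] [DecidableEq m] (A : Matrix m m ℂ) :
    Matrix m m ℂ :=
  1 - pinvH A * A

/-- The number of positive eigenvalues (with multiplicity) of a Hermitian matrix. -/
noncomputable def iPos {m : Type*} [Fintype m] [DecidableEq m] (A : Matrix m m ℂ) : ℕ :=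
  if hA : A.IsHermitian then Nat.card {i // 0 < hA.eigenvalues i} else 0

/-- The number of negative eigenvalues (with multiplicity) of a Hermitian matrix. -/
noncomputable def iNeg {m : Type*} [Fintype m] [DecidableEq m] (A : Matrix m m ℂ) : ℕ :=
  if hA : A.IsHermitian then Nat.card {i // hA.eigenvalues i < 0} else 0

/-- The number of zero eigenvalues (with multiplicity) of a Hermitian matrix. -/
noncomputable def iZero {m : Type*} [Fintype m] [DecidableEq m] (A : Matrix m m ℂ) : ℕ :=
  if hA : A.IsHermitian then Nat.card {i // hA.eigenvalues i = 0} else 0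

/-!
The formulas come from computing the signature of `[Ω B*; B A]` in two ways. Eliminating `A`, which
is possible because `Null(A) ⊆ Null(B*)`, leaves `W ⊕ A`. Eliminating `Ω` as far as possible leaves
`[Ω C*; C D]` with `C = BP` and `D = A − BΩ⁺B*`. Since `CΩ = 0`, a further shear reduces `D` to its
compression to `Null(C*) = 𝒬`, and the result is the orthogonal sum of `Ω`, `S` and `[0 C*; C 0]`.
The last summand is congruent to its own negative, so it adds `rank C = i_∞(S)` to both `i₊` and
`i₋`. The formula for `i₀` follows by counting dimensions.
-/

section Congruence

variable {k l m n : Type*} [Fintype m]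

/-- `A` represents the pullback of the form of `D` along a linear map `Y`, which need not be
injective, surjective, or between spaces of the same dimension. -/
def FormPullback (A : Matrix n n ℂ) (D : Matrix m m ℂ) : Prop :=
  ∃ Y : Matrix m n ℂ, A = Yᴴ * D * Y

theorem FormPullback.isHermitian {A : Matrix n n ℂ} {D : Matrix m m ℂ} (h : FormPullback A D)
    (hD : D.IsHermitian) : A.IsHermitian := by
  obtain ⟨Y, rfl⟩ := h
  exact isHermitian_conjTranspose_mul_mul Y hD

theorem FormPullback.trans [Fintype n] {A : Matrix k k ℂ} {D : Matrix m m ℂ} {E : Matrix n n ℂ}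
    (hAD : FormPullback A D) (hDE : FormPullback D E) : FormPullback A E := by
  obtain ⟨Y, rfl⟩ := hAD
  obtain ⟨Z, rfl⟩ := hDE
  exact ⟨Z * Y, by simp only [conjTranspose_mul, Matrix.mul_assoc]⟩

theorem FormPullback.neg {A : Matrix n n ℂ} {D : Matrix m m ℂ} (h : FormPullback A D) :
    FormPullback (-A) (-D) := by
  obtain ⟨Y, rfl⟩ := h
  exact ⟨Y, by simp only [Matrix.mul_neg, Matrix.neg_mul]⟩

theorem FormPullback.directSum [Fintype n] {A : Matrix k k ℂ} {A' : Matrix l l ℂ}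
    {D : Matrix m m ℂ} {D' : Matrix n n ℂ}
    (h : FormPullback A D) (h' : FormPullback A' D') :
    FormPullback (fromBlocks A 0 0 A') (fromBlocks D 0 0 D') := by
  obtain ⟨Y, rfl⟩ := h
  obtain ⟨Z, rfl⟩ := h'
  exact ⟨fromBlocks Y 0 0 Z, by simp [fromBlocks_conjTranspose, fromBlocks_multiply]⟩

/-- Congruence of Hermitian forms modulo their null spaces: each form is a pullback of the other.
The two matrices may have different sizes. -/
def FormCongruent [Fintype n] (A : Matrix n n ℂ) (D : Matrix m m ℂ) : Prop :=
  FormPullback A D ∧ FormPullback D A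

variable [Fintype n]

theorem FormCongruent.symm {A : Matrix n n ℂ} {D : Matrix m m ℂ} (h : FormCongruent A D) :
    FormCongruent D A :=
  ⟨h.2, h.1⟩

theorem FormCongruent.trans [Fintype k] {A : Matrix k k ℂ} {D : Matrix m m ℂ} {E : Matrix n n ℂ}
    (hAD : FormCongruent A D) (hDE : FormCongruent D E) : FormCongruent A E :=
  ⟨hAD.1.trans hDE.1, hDE.2.trans hAD.2⟩

theorem FormCongruent.neg {A : Matrix n n ℂ} {D : Matrix m m ℂ} (h : FormCongruent A D) :
    FormCongruent (-A) (-D) :=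
  ⟨h.1.neg, h.2.neg⟩

theorem FormCongruent.directSum [Fintype k] [Fintype l] {A : Matrix k k ℂ} {A' : Matrix l l ℂ}
    {D : Matrix m m ℂ} {D' : Matrix n n ℂ}
    (h : FormCongruent A D) (h' : FormCongruent A' D') :
    FormCongruent (fromBlocks A 0 0 A') (fromBlocks D 0 0 D') :=
  ⟨h.1.directSum h'.1, h.2.directSum h'.2⟩

theorem formCongruent_conj_of_mul_eq_one [DecidableEq n] (M : Matrix n n ℂ) {X : Matrix n m ℂ}
    {Z : Matrix m n ℂ} (hXZ : X * Z = 1) : FormCongruent M (Xᴴ * M * X) := by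
  refine ⟨⟨Z, ?_⟩, ⟨X, rfl⟩⟩
  calc M = (X * Z)ᴴ * M * (X * Z) := by simp only [hXZ, conjTranspose_one, one_mul, mul_one]
    _ = Zᴴ * (Xᴴ * M * X) * Z := by simp only [conjTranspose_mul, Matrix.mul_assoc]

theorem formCongruent_fromBlocks_swap (A : Matrix m m ℂ) (B : Matrix m n ℂ)
    (C : Matrix n m ℂ) (D : Matrix n n ℂ) :
    FormCongruent (fromBlocks A B C D) (fromBlocks D C B A) := by
  classical
  let swap : Matrix (m ⊕ n) (n ⊕ m) ℂ := fromBlocks 0 1 1 0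
  have swap_mul_swap : swap * (fromBlocks 0 1 1 0 : Matrix (n ⊕ m) (m ⊕ n) ℂ) = 1 := by
    simp [swap, fromBlocks_multiply]
  simpa [swap, fromBlocks_conjTranspose, fromBlocks_multiply] using
    formCongruent_conj_of_mul_eq_one (fromBlocks A B C D) swap_mul_swap

theorem formCongruent_fromBlocks_shear {K : Matrix n n ℂ} (hK : K.IsHermitian)
    (L : Matrix m n ℂ) (D : Matrix m m ℂ) (E : Matrix n m ℂ) :
    FormCongruent (fromBlocks K Lᴴ L D)
      (fromBlocks K (L + Eᴴ * K)ᴴ (L + Eᴴ * K) (D + (L * E + (L * E)ᴴ + Eᴴ * K * E))) := by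
  classical
  let shear (E : Matrix n m ℂ) : Matrix (n ⊕ m) (n ⊕ m) ℂ := fromBlocks 1 E 0 1
  have shear_mul_shear_neg : shear E * shear (-E) = 1 := by
    simp [shear, fromBlocks_multiply]
  convert! formCongruent_conj_of_mul_eq_one (fromBlocks K Lᴴ L D) shear_mul_shear_neg using 1
  simp only [shear, fromBlocks_conjTranspose, fromBlocks_multiply, conjTranspose_add,
    conjTranspose_mul, conjTranspose_conjTranspose, conjTranspose_one, conjTranspose_zero, hK.eq,
    Matrix.mul_one, Matrix.one_mul, Matrix.mul_zero, Matrix.zero_mul, add_zero, Matrix.add_mul]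
  congr 1 <;> abel

end Congruence

section DiagonalForms

variable {k m n : Type*} [Fintype m] [DecidableEq m] [DecidableEq n]

theorem star_dotProduct_diagonal_mulVec_nonpos {e : m → ℝ} {u : m → ℂ}
    (hu : ∀ j, 0 < e j → u j = 0) :
    star u ⬝ᵥ (diagonal (fun j => (e j : ℂ)) *ᵥ u) ≤ 0 := by
  refine Finset.sum_nonpos fun j _ => ?_
  rcases lt_or_ge 0 (e j) with hj | hj
  · simp [hu j hj]
  · calc star (u j) * (diagonal (fun j => (e j : ℂ)) *ᵥ u) j
        = ((e j * normSq (u j) : ℝ) : ℂ) := by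
          rw [mulVec_diagonal, ofReal_mul, normSq_eq_conj_mul_self]
          simp only [RCLike.star_def]
          ring
      _ ≤ 0 := by exact_mod_cast mul_nonpos_of_nonpos_of_nonneg hj (normSq_nonneg _)

theorem card_le_card_pos_of_posDef [Finite k] {e : m → ℝ} {Y : Matrix m k ℂ}
    (h : (Yᴴ * diagonal (fun j => (e j : ℂ)) * Y).PosDef) :
    Nat.card k ≤ Nat.card {j // 0 < e j} := by
  have := Fintype.ofFinite k
  let restrict : Matrix {j // 0 < e j} k ℂ := Y.submatrix Subtype.val id
  have restrict_injective : Function.Injective restrict.mulVecLin := by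
    refine (injective_iff_map_eq_zero _).2 fun x hx => ?_
    by_contra hx0
    have hYx : ∀ j, 0 < e j → (Y *ᵥ x) j = 0 := fun j hj => congrFun hx ⟨j, hj⟩
    refine (h.dotProduct_mulVec_pos hx0).not_ge ?_
    rw [← mulVec_mulVec, ← mulVec_mulVec, dotProduct_mulVec, ← star_mulVec]
    exact star_dotProduct_diagonal_mulVec_nonpos hYx
  simpa [Nat.card_eq_fintype_card] using
    LinearMap.finrank_le_finrank_of_injective restrict_injective

theorem FormPullback.card_pos_le [Finite n] {d : n → ℝ} {e : m → ℝ}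
    (h : FormPullback (diagonal fun i => (d i : ℂ)) (diagonal fun j => (e j : ℂ))) :
    Nat.card {i // 0 < d i} ≤ Nat.card {j // 0 < e j} := by
  obtain ⟨Z, hZ⟩ := h
  refine card_le_card_pos_of_posDef (Y := Z.submatrix id Subtype.val) ?_
  have restrict_eq : (Z.submatrix id Subtype.val)ᴴ * diagonal (fun j => (e j : ℂ)) *
      Z.submatrix id Subtype.val = diagonal fun i : {i // 0 < d i} => (d i : ℂ) :=
    calc
      _ = (Zᴴ * diagonal (fun j => (e j : ℂ)) * Z).submatrix Subtype.val Subtype.val := rfl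
      _ = _ := by rw [← hZ]; exact submatrix_diagonal _ _ Subtype.val_injective
  rw [restrict_eq]
  exact .diagonal fun i => by exact_mod_cast i.2

theorem neg_diagonal_ofReal (d : n → ℝ) :
    -diagonal (fun i => (d i : ℂ)) = diagonal fun i => ((-d i : ℝ) : ℂ) := by
  simp only [diagonal_neg, ofReal_neg]

theorem FormPullback.card_neg_le [Finite n] {d : n → ℝ} {e : m → ℝ}
    (h : FormPullback (diagonal fun i => (d i : ℂ)) (diagonal fun j => (e j : ℂ))) :
    Nat.card {i // d i < 0} ≤ Nat.card {j // e j < 0} := by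
  have h_neg := h.neg
  rw [neg_diagonal_ofReal, neg_diagonal_ofReal] at h_neg
  simpa only [Left.neg_pos_iff] using h_neg.card_pos_le

end DiagonalForms

section Signature

variable {m n : Type*} [Fintype m] [DecidableEq m] [Fintype n] [DecidableEq n]

/-- The numbers `(i₊, i₋)` of positive and negative eigenvalues. Omitting `i₀` makes this invariant
under `FormCongruent`, which does not preserve the size of a matrix. -/
def signature (A : Matrix n n ℂ) : ℕ × ℕ :=
  (iPos A, iNeg A)

theorem iPos_add_iNeg {A : Matrix n n ℂ} (hA : A.IsHermitian) : iPos A + iNeg A = A.rank := by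
  classical
  have disj : Disjoint (fun i => hA.eigenvalues i < 0) (fun i => 0 < hA.eigenvalues i) :=
    Pi.disjoint_iff.2 fun i => Prop.disjoint_iff.2 fun h => h.1.asymm h.2
  rw [hA.rank_eq_card_non_zero_eigs]
  simp only [iPos, iNeg, dif_pos hA, Nat.card_eq_fintype_card, ← lt_or_lt_iff_ne]
  rw [Fintype.card_subtype_or_disjoint _ _ disj, add_comm]

theorem iPos_add_iNeg_add_iZero {A : Matrix n n ℂ} (hA : A.IsHermitian) :
    iPos A + iNeg A + iZero A = Fintype.card n := by
  classical
  rw [iPos_add_iNeg hA, hA.rank_eq_card_non_zero_eigs, iZero, dif_pos hA,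
    ← Nat.card_eq_fintype_card, ← Nat.card_eq_fintype_card, add_comm, ← Nat.card_sum]
  exact Nat.card_congr (Equiv.sumCompl fun i => hA.eigenvalues i = 0)

theorem formCongruent_diagonal_eigenvalues {A : Matrix n n ℂ} (hA : A.IsHermitian) :
    FormCongruent A (diagonal fun i => (hA.eigenvalues i : ℂ)) := by
  have unitary_mul_star : (hA.eigenvectorUnitary : Matrix n n ℂ) *
      star (hA.eigenvectorUnitary : Matrix n n ℂ) = 1 :=
    Unitary.coe_mul_star_self _
  have star_conj_eq := hA.conjStarAlgAut_star_eigenvectorUnitary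
  rw [Unitary.conjStarAlgAut_star_apply] at star_conj_eq
  convert! formCongruent_conj_of_mul_eq_one A unitary_mul_star using 1
  exact star_conj_eq.symm

theorem signature_eq_of_formCongruent_diagonal {A : Matrix n n ℂ} {d : m → ℝ}
    (h : FormCongruent A (diagonal fun i => (d i : ℂ))) :
    signature A = (Nat.card {i // 0 < d i}, Nat.card {i // d i < 0}) := by
  have hA : A.IsHermitian := h.1.isHermitian (isHermitian_diagonal_of_self_adjoint _ (by ext; simp))
  have h_eig := (formCongruent_diagonal_eigenvalues hA).symm.trans h
  simp only [signature, iPos, iNeg, dif_pos hA]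
  exact Prod.ext (le_antisymm h_eig.1.card_pos_le h_eig.2.card_pos_le)
    (le_antisymm h_eig.1.card_neg_le h_eig.2.card_neg_le)

theorem FormCongruent.signature_eq {A : Matrix n n ℂ} {D : Matrix m m ℂ} (hD : D.IsHermitian)
    (h : FormCongruent A D) : signature A = signature D := by
  have hD_diag := formCongruent_diagonal_eigenvalues hD
  rw [signature_eq_of_formCongruent_diagonal (h.trans hD_diag),
    signature_eq_of_formCongruent_diagonal hD_diag]

theorem signature_neg {A : Matrix n n ℂ} (hA : A.IsHermitian) :
    signature (-A) = (signature A).swap := by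
  have h_neg := (formCongruent_diagonal_eigenvalues hA).neg
  rw [neg_diagonal_ofReal] at h_neg
  rw [signature_eq_of_formCongruent_diagonal h_neg,
    signature_eq_of_formCongruent_diagonal (formCongruent_diagonal_eigenvalues hA)]
  simp only [Left.neg_pos_iff, Left.neg_neg_iff, Prod.swap_prod_mk]

theorem signature_fromBlocks_diagonal {A : Matrix m m ℂ} {D : Matrix n n ℂ} (hA : A.IsHermitian)
    (hD : D.IsHermitian) : signature (fromBlocks A 0 0 D) = signature A + signature D := by
  have hA_diag := formCongruent_diagonal_eigenvalues hA
  have hD_diag := formCongruent_diagonal_eigenvalues hD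
  have h_diag : FormCongruent (fromBlocks A 0 0 D)
      (diagonal fun i => ((Sum.elim hA.eigenvalues hD.eigenvalues i : ℝ) : ℂ)) := by
    convert! hA_diag.directSum hD_diag using 1
    rw [fromBlocks_diagonal]
    congr 1
    ext (i | i) <;> rfl
  rw [signature_eq_of_formCongruent_diagonal h_diag, signature_eq_of_formCongruent_diagonal hA_diag,
    signature_eq_of_formCongruent_diagonal hD_diag, Prod.mk_add_mk, ← Nat.card_sum, ← Nat.card_sum,
    Nat.card_congr Equiv.subtypeSum, Nat.card_congr Equiv.subtypeSum]
  rfl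

end Signature

section Pseudoinverse

variable {k l m n : Type*} [Fintype m] [Fintype n] [DecidableEq n]

theorem pinvH_eq_cfc {A : Matrix n n ℂ} (hA : A.IsHermitian) :
    pinvH A = cfc (fun x : ℝ => x⁻¹) A := by
  rw [hA.cfc_eq, IsHermitian.cfc, Unitary.conjStarAlgAut_apply, pinvH, dif_pos hA]
  congr 3
  ext i
  split_ifs with hi <;> simp [hi]

theorem isHermitian_pinvH {A : Matrix n n ℂ} (hA : A.IsHermitian) : (pinvH A).IsHermitian := by
  rw [pinvH_eq_cfc hA]
  exact cfc_predicate _ _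

theorem commute_pinvH {A : Matrix n n ℂ} (hA : A.IsHermitian) : Commute A (pinvH A) := by
  have hcomm := cfc_commute_cfc (id : ℝ → ℝ) (fun x => x⁻¹) A
  rwa [cfc_id ℝ A hA.isSelfAdjoint, ← pinvH_eq_cfc hA] at hcomm

theorem mul_pinvH_eq_cfc {A : Matrix n n ℂ} (hA : A.IsHermitian) :
    A * pinvH A = cfc (fun x : ℝ => x * x⁻¹) A := by
  have hcont (f : ℝ → ℝ) : ContinuousOn f (spectrum ℝ A) := A.finite_real_spectrum.continuousOn f
  rw [pinvH_eq_cfc hA, cfc_mul _ _ A (hcont _) (hcont _), cfc_id' ℝ A hA.isSelfAdjoint]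

theorem mul_pinvH_mul_self {A : Matrix n n ℂ} (hA : A.IsHermitian) : A * pinvH A * A = A := by
  have hcont (f : ℝ → ℝ) : ContinuousOn f (spectrum ℝ A) := A.finite_real_spectrum.continuousOn f
  have hid := cfc_id' ℝ A hA.isSelfAdjoint
  calc A * pinvH A * A = cfc (fun x : ℝ => x * x⁻¹ * x) A := by
        rw [mul_pinvH_eq_cfc hA, cfc_mul (fun x => x * x⁻¹) (fun x => x) A (hcont _) (hcont _), hid]
    _ = A := by simp only [mul_inv_mul_cancel, hid]

theorem pinvH_mul_self_mul_pinvH {A : Matrix n n ℂ} (hA : A.IsHermitian) :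
    pinvH A * A * pinvH A = pinvH A := by
  have h_inv (x : ℝ) : x⁻¹ * (x * x⁻¹) = x⁻¹ := by
    rw [← mul_assoc]
    simpa only [inv_inv] using mul_inv_mul_cancel x⁻¹
  have hcont (f : ℝ → ℝ) : ContinuousOn f (spectrum ℝ A) := A.finite_real_spectrum.continuousOn f
  calc pinvH A * A * pinvH A = cfc (fun x : ℝ => x⁻¹ * (x * x⁻¹)) A := by
        rw [Matrix.mul_assoc, mul_pinvH_eq_cfc hA, pinvH_eq_cfc hA,
          cfc_mul (fun x => x⁻¹) (fun x => x * x⁻¹) A (hcont _) (hcont _)]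
    _ = pinvH A := by simp only [h_inv, pinvH_eq_cfc hA]

theorem mul_nullProj {A : Matrix n n ℂ} (hA : A.IsHermitian) : A * nullProj A = 0 := by
  rw [nullProj, Matrix.mul_sub, ← Matrix.mul_assoc, mul_pinvH_mul_self hA, Matrix.mul_one, sub_self]

theorem nullProj_mul {A : Matrix n n ℂ} (hA : A.IsHermitian) : nullProj A * A = 0 := by
  rw [nullProj, Matrix.sub_mul, ← (commute_pinvH hA).eq, mul_pinvH_mul_self hA, Matrix.one_mul,
    sub_self]

theorem mul_pinvH_eq_one_sub_nullProj {A : Matrix n n ℂ} (hA : A.IsHermitian) :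
    A * pinvH A = 1 - nullProj A := by
  rw [nullProj, sub_sub_cancel, (commute_pinvH hA).eq]

theorem isHermitian_nullProj {A : Matrix n n ℂ} (hA : A.IsHermitian) :
    (nullProj A).IsHermitian := by
  rw [nullProj, IsHermitian, conjTranspose_sub, conjTranspose_mul, hA.eq, (isHermitian_pinvH hA).eq,
    conjTranspose_one, (commute_pinvH hA).eq]

theorem nullProj_mul_nullProj {A : Matrix n n ℂ} (hA : A.IsHermitian) :
    nullProj A * nullProj A = nullProj A := by
  nth_rewrite 1 [nullProj]
  rw [Matrix.sub_mul, Matrix.mul_assoc, mul_nullProj hA, Matrix.one_mul, Matrix.mul_zero, sub_zero]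

theorem nullProj_mul_of_mul_eq_zero {A : Matrix n n ℂ} {X : Matrix n k ℂ} (h : A * X = 0) :
    nullProj A * X = X := by
  rw [nullProj, Matrix.sub_mul, Matrix.mul_assoc, h, Matrix.mul_zero, Matrix.one_mul, sub_zero]

theorem mul_nullProj_eq_zero_of_ker_le {A : Matrix n n ℂ} (hA : A.IsHermitian) {X : Matrix k n ℂ}
    (hker : ∀ x, A *ᵥ x = 0 → X *ᵥ x = 0) : X * nullProj A = 0 := by
  refine ext_of_mulVec_single fun j => ?_
  rw [← mulVec_mulVec, zero_mulVec]
  exact hker _ (by rw [mulVec_mulVec, mul_nullProj hA, zero_mulVec])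

theorem conjTranspose_mul_nullProj [Fintype l] (C : Matrix n l ℂ) :
    Cᴴ * nullProj (C * Cᴴ) = 0 :=
  (self_mul_conjTranspose_mul_eq_zero C _).1 (mul_nullProj (isHermitian_mul_conjTranspose_self C))

theorem formCongruent_compression {G : Matrix n n ℂ} (hG : G.IsHermitian) {V : Matrix n m ℂ}
    (hV : LinearMap.range V.mulVecLin = LinearMap.ker G.mulVecLin) (D : Matrix n n ℂ) :
    FormCongruent (Vᴴ * D * V) (nullProj G * D * nullProj G) := by
  classical
  have proj_mul_V : nullProj G * V = V := by
    refine nullProj_mul_of_mul_eq_zero (ext_of_mulVec_single fun j => ?_)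
    have hVj : V.mulVecLin (Pi.single j 1) ∈ LinearMap.ker G.mulVecLin := hV ▸ ⟨_, rfl⟩
    rw [← mulVec_mulVec, zero_mulVec]
    exact hVj
  obtain ⟨Y, hY⟩ : ∃ Y : Matrix m n ℂ, V * Y = nullProj G := by
    have hcol (j : n) : nullProj G *ᵥ Pi.single j 1 ∈ LinearMap.range V.mulVecLin := by
      rw [hV, LinearMap.mem_ker, mulVecLin_apply, mulVec_mulVec, mul_nullProj hG, zero_mulVec]
    choose y hy using hcol
    refine ⟨(of y)ᵀ, ext_of_mulVec_single fun j => ?_⟩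
    rw [← hy j, ← mulVec_mulVec, mulVec_single_one]
    rfl
  have hP := (isHermitian_nullProj hG).eq
  refine ⟨⟨V, ?_⟩, ⟨Y, ?_⟩⟩
  · calc Vᴴ * D * V = (nullProj G * V)ᴴ * D * (nullProj G * V) := by rw [proj_mul_V]
      _ = Vᴴ * (nullProj G * D * nullProj G) * V := by
        simp only [conjTranspose_mul, hP, Matrix.mul_assoc]
  · calc nullProj G * D * nullProj G = (nullProj G)ᴴ * D * nullProj G := by rw [hP]
      _ = Yᴴ * (Vᴴ * D * V) * Y := by
        simp only [← hY, conjTranspose_mul, Matrix.mul_assoc]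

theorem signature_add_of_mul_eq_zero {M N : Matrix n n ℂ} (hM : M.IsHermitian)
    (hN : N.IsHermitian) (hMN : M * N = 0) : signature (M + N) = signature M + signature N := by
  have hNM : N * M = 0 := by simpa [hM.eq, hN.eq] using congrArg conjTranspose hMN
  have hM_supp : M * (pinvH M * M) = M := by rw [← Matrix.mul_assoc, mul_pinvH_mul_self hM]
  have hN_supp : N * (pinvH N * N) = N := by rw [← Matrix.mul_assoc, mul_pinvH_mul_self hN]
  have hM_suppN : M * (pinvH N * N) = 0 := by
    rw [← (commute_pinvH hN).eq, ← Matrix.mul_assoc, hMN, Matrix.zero_mul]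
  have hN_suppM : N * (pinvH M * M) = 0 := by
    rw [← (commute_pinvH hM).eq, ← Matrix.mul_assoc, hNM, Matrix.zero_mul]
  have hsuppM_N : M * pinvH M * N = 0 := by
    rw [(commute_pinvH hM).eq, Matrix.mul_assoc, hMN, Matrix.mul_zero]
  have hsuppN_M : N * pinvH N * M = 0 := by
    rw [(commute_pinvH hN).eq, Matrix.mul_assoc, hNM, Matrix.mul_zero]
  have restrict_supports : (M + N) * fromCols (pinvH M * M) (pinvH N * N) = fromCols M N := by
    rw [mul_fromCols, Matrix.add_mul, Matrix.add_mul, hM_supp, hN_supp, hM_suppN, hN_suppM,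
      add_zero, zero_add]
  rw [← signature_fromBlocks_diagonal hM hN]
  refine FormCongruent.signature_eq (hM.fromBlocks conjTranspose_zero hN)
    ⟨⟨fromRows 1 1, ?_⟩, ⟨fromCols (pinvH M * M) (pinvH N * N), ?_⟩⟩
  · simp [conjTranspose_fromRows_eq_fromCols_conjTranspose, fromCols_mul_fromBlocks,
      fromCols_mul_fromRows]
  · rw [Matrix.mul_assoc, restrict_supports, conjTranspose_fromCols_eq_fromRows_conjTranspose,
      fromRows_mul_fromCols]
    simp only [conjTranspose_mul, hM.eq, hN.eq, (isHermitian_pinvH hM).eq,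
      (isHermitian_pinvH hN).eq, mul_pinvH_mul_self hM, mul_pinvH_mul_self hN, hsuppM_N, hsuppN_M]

end Pseudoinverse

section BlockMatrices

variable {k m n : Type*}

theorem isHermitian_fromBlocks_antidiagonal (C : Matrix m n ℂ) :
    (fromBlocks 0 Cᴴ C 0).IsHermitian :=
  isHermitian_zero.fromBlocks (conjTranspose_conjTranspose C) isHermitian_zero

variable [Fintype n]

theorem isHermitian_schur [DecidableEq n] {K : Matrix n n ℂ} {D : Matrix m m ℂ} (hK : K.IsHermitian)
    (hD : D.IsHermitian) (L : Matrix m n ℂ) : (D - L * pinvH K * Lᴴ).IsHermitian :=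
  hD.sub (isHermitian_mul_mul_conjTranspose L (isHermitian_pinvH hK))

variable [Fintype m]

theorem rank_fromBlocks_antidiagonal (C : Matrix m n ℂ) :
    (fromBlocks 0 Cᴴ C 0).rank = C.rank + C.rank := by
  classical
  have hCC := isHermitian_mul_conjTranspose_self C
  have hCC' := isHermitian_conjTranspose_mul_self C
  have h_sum := signature_fromBlocks_diagonal hCC' hCC
  simp only [signature, Prod.mk_add_mk, Prod.mk.injEq] at h_sum
  rw [← rank_conjTranspose_mul_self, (isHermitian_fromBlocks_antidiagonal C).eq,
    fromBlocks_multiply]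
  simp only [Matrix.mul_zero, Matrix.zero_mul, add_zero, zero_add]
  rw [← iPos_add_iNeg (hCC'.fromBlocks conjTranspose_zero hCC), h_sum.1, h_sum.2,
    add_add_add_comm, iPos_add_iNeg hCC', iPos_add_iNeg hCC, rank_conjTranspose_mul_self,
    rank_self_mul_conjTranspose]

theorem formCongruent_neg_fromBlocks_antidiagonal (C : Matrix m n ℂ) :
    FormCongruent (fromBlocks 0 Cᴴ C 0) (-fromBlocks 0 Cᴴ C 0) := by
  classical
  let reflection : Matrix (n ⊕ m) (n ⊕ m) ℂ := fromBlocks 1 0 0 (-1)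
  have reflection_mul_self : reflection * reflection = 1 := by
    simp [reflection, fromBlocks_multiply]
  simpa [reflection, fromBlocks_conjTranspose, fromBlocks_multiply, fromBlocks_neg] using
    formCongruent_conj_of_mul_eq_one (fromBlocks 0 Cᴴ C 0) reflection_mul_self

theorem formCongruent_fromBlocks_schur [DecidableEq n] {K : Matrix n n ℂ}
    (hK : K.IsHermitian) (L : Matrix m n ℂ) (D : Matrix m m ℂ) :
    FormCongruent (fromBlocks K Lᴴ L D)
      (fromBlocks K (L * nullProj K)ᴴ (L * nullProj K) (D - L * pinvH K * Lᴴ)) := by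
  have hE : (-(pinvH K * Lᴴ))ᴴ = -(L * pinvH K) := by
    rw [conjTranspose_neg, conjTranspose_mul, conjTranspose_conjTranspose,
      (isHermitian_pinvH hK).eq]
  have off_diagonal : L + (-(pinvH K * Lᴴ))ᴴ * K = L * nullProj K := by
    rw [hE, nullProj, Matrix.mul_sub, Matrix.mul_one, Matrix.neg_mul, Matrix.mul_assoc,
      ← sub_eq_add_neg]
  have corner : L * -(pinvH K * Lᴴ) + (L * -(pinvH K * Lᴴ))ᴴ +
      (-(pinvH K * Lᴴ))ᴴ * K * -(pinvH K * Lᴴ) = -(L * pinvH K * Lᴴ) := by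
    have h_pinv : L * pinvH K * K * (pinvH K * Lᴴ) = L * pinvH K * Lᴴ := by
      conv_rhs => rw [← pinvH_mul_self_mul_pinvH hK]
      simp only [Matrix.mul_assoc]
    rw [conjTranspose_mul, hE]
    simp only [Matrix.neg_mul, Matrix.mul_neg, neg_neg, h_pinv]
    simp only [Matrix.mul_assoc]
    abel
  have h_shear := formCongruent_fromBlocks_shear hK L D (-(pinvH K * Lᴴ))
  rwa [off_diagonal, corner, ← sub_eq_add_neg] at h_shear

-- A shear by `E` with `K * E = 0` changes `D` by `C * E + (C * E)ᴴ`. With `Π = nullProj (C * Cᴴ)`,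
-- the choice below gives `C * E = -(1 - Π) * D * (1 + Π) / 2`, which together with its
-- adjoint cancels all of `D` except `Π * D * Π`.
theorem formCongruent_fromBlocks_compress [DecidableEq m] {K : Matrix n n ℂ} {C : Matrix m n ℂ}
    {D : Matrix m m ℂ} (hK : K.IsHermitian) (hD : D.IsHermitian) (hCK : C * K = 0) :
    FormCongruent (fromBlocks K Cᴴ C D)
      (fromBlocks K Cᴴ C (nullProj (C * Cᴴ) * D * nullProj (C * Cᴴ))) := by
  have hG := isHermitian_mul_conjTranspose_self C
  have hproj := (isHermitian_nullProj hG).eq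
  have hKC : K * Cᴴ = 0 := by simpa [hK.eq] using congrArg conjTranspose hCK
  obtain ⟨E, hE⟩ : ∃ E, E = (-1 / 2 : ℂ) •
      (Cᴴ * (pinvH (C * Cᴴ) * (D * (1 + nullProj (C * Cᴴ))))) := ⟨_, rfl⟩
  have hKE : K * E = 0 := by
    rw [hE, Matrix.mul_smul, ← Matrix.mul_assoc, hKC, Matrix.zero_mul, smul_zero]
  have hEK : Eᴴ * K = 0 := by simpa [hK.eq] using congrArg conjTranspose hKE
  have hCE : C * E = (-1 / 2 : ℂ) •
      ((1 - nullProj (C * Cᴴ)) * (D * (1 + nullProj (C * Cᴴ)))) := by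
    rw [hE, Matrix.mul_smul, ← mul_pinvH_eq_one_sub_nullProj hG]
    simp only [Matrix.mul_assoc]
  have corner : D + (C * E + (C * E)ᴴ + Eᴴ * K * E) =
      nullProj (C * Cᴴ) * D * nullProj (C * Cᴴ) := by
    have star_neg_half : star (-1 / 2 : ℂ) = -1 / 2 := by simp
    rw [hEK, hCE]
    simp only [conjTranspose_smul, conjTranspose_mul, conjTranspose_sub, conjTranspose_add,
      hproj, hD.eq, star_neg_half, Matrix.sub_mul, Matrix.mul_add, Matrix.one_mul, Matrix.mul_one,
      Matrix.zero_mul, Matrix.mul_assoc]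
    module
  have h_shear := formCongruent_fromBlocks_shear hK C D E
  rwa [corner, hEK, add_zero] at h_shear

variable [Fintype k] [DecidableEq k] [DecidableEq m] [DecidableEq n]

theorem signature_fromBlocks_antidiagonal (C : Matrix m n ℂ) :
    signature (fromBlocks 0 Cᴴ C 0) = (C.rank, C.rank) := by
  have hT := isHermitian_fromBlocks_antidiagonal C
  have h_symm := (formCongruent_neg_fromBlocks_antidiagonal C).signature_eq hT.neg
  have h_rank := iPos_add_iNeg hT
  rw [signature_neg hT] at h_symm
  rw [rank_fromBlocks_antidiagonal] at h_rank
  simp only [signature, Prod.swap_prod_mk, Prod.mk.injEq] at h_symm ⊢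
  omega

theorem signature_fromBlocks_of_mul_eq_zero {K : Matrix n n ℂ} {C : Matrix m n ℂ}
    {D : Matrix m m ℂ} (hK : K.IsHermitian) (hD : D.IsHermitian) (hCK : C * K = 0)
    (hCD : Cᴴ * D = 0) :
    signature (fromBlocks K Cᴴ C D) = signature K + signature D + (C.rank, C.rank) := by
  have hKC : K * Cᴴ = 0 := by simpa [hK.eq] using congrArg conjTranspose hCK
  have hDC : D * C = 0 := by simpa [hD.eq] using congrArg conjTranspose hCD
  have orthogonal : fromBlocks K 0 0 D * fromBlocks 0 Cᴴ C 0 = 0 := by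
    simp [fromBlocks_multiply, hKC, hDC]
  have h_sum := signature_add_of_mul_eq_zero (hK.fromBlocks conjTranspose_zero hD)
    (isHermitian_fromBlocks_antidiagonal C) orthogonal
  rwa [fromBlocks_add, add_zero, add_zero, zero_add, zero_add, signature_fromBlocks_diagonal hK hD,
    signature_fromBlocks_antidiagonal] at h_sum

theorem signature_fromBlocks_of_mul_eq_zero_of_range_eq_ker {K : Matrix n n ℂ} {C : Matrix m n ℂ}
    {D : Matrix m m ℂ} {V : Matrix m k ℂ} (hK : K.IsHermitian) (hD : D.IsHermitian)
    (hCK : C * K = 0)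
    (hV : LinearMap.range V.mulVecLin = LinearMap.ker (C * Cᴴ).mulVecLin) :
    signature (fromBlocks K Cᴴ C D) = signature K + signature (Vᴴ * D * V) + (C.rank, C.rank) := by
  have hG := isHermitian_mul_conjTranspose_self C
  have hcomp : (nullProj (C * Cᴴ) * D * nullProj (C * Cᴴ)).IsHermitian := by
    simpa only [(isHermitian_nullProj hG).eq] using
      isHermitian_conjTranspose_mul_mul (nullProj (C * Cᴴ)) hD
  have hC_comp : Cᴴ * (nullProj (C * Cᴴ) * D * nullProj (C * Cᴴ)) = 0 := by
    simp only [← Matrix.mul_assoc, conjTranspose_mul_nullProj, Matrix.zero_mul]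
  rw [(formCongruent_compression hG hV D).signature_eq hcomp,
    ← signature_fromBlocks_of_mul_eq_zero hK hcomp hCK hC_comp]
  exact (formCongruent_fromBlocks_compress hK hD hCK).signature_eq
    (hK.fromBlocks (conjTranspose_conjTranspose C) hcomp)

theorem signature_fromBlocks_eq_add_schur {A : Matrix m m ℂ} {Ω : Matrix n n ℂ} {B : Matrix m n ℂ}
    (hA : A.IsHermitian) (hΩ : Ω.IsHermitian) (hker : ∀ x, A *ᵥ x = 0 → Bᴴ *ᵥ x = 0) :
    signature (fromBlocks Ω Bᴴ B A) = signature A + signature (Ω - Bᴴ * pinvH A * B) := by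
  have hW : (Ω - Bᴴ * pinvH A * B).IsHermitian := by
    simpa only [conjTranspose_conjTranspose] using isHermitian_schur hA hΩ Bᴴ
  have h_schur := formCongruent_fromBlocks_schur hA Bᴴ Ω
  rw [mul_nullProj_eq_zero_of_ker_le hA hker, conjTranspose_zero, conjTranspose_conjTranspose]
    at h_schur
  rw [← signature_fromBlocks_diagonal hA hW]
  exact ((formCongruent_fromBlocks_swap Ω Bᴴ B A).trans h_schur).signature_eq
    (hA.fromBlocks conjTranspose_zero hW)

theorem signature_fromBlocks_eq_add_compressed_schur {A : Matrix m m ℂ} {Ω : Matrix n n ℂ}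
    {B : Matrix m n ℂ} {V : Matrix m k ℂ} (hA : A.IsHermitian) (hΩ : Ω.IsHermitian)
    (hV : LinearMap.range V.mulVecLin = LinearMap.ker (B * nullProj Ω * Bᴴ).mulVecLin) :
    signature (fromBlocks Ω Bᴴ B A) = signature Ω +
      signature (Vᴴ * (A - B * pinvH Ω * Bᴴ) * V) +
        ((B * nullProj Ω * Bᴴ).rank, (B * nullProj Ω * Bᴴ).rank) := by
  have gram_eq : B * nullProj Ω * Bᴴ = B * nullProj Ω * (B * nullProj Ω)ᴴ := by
    rw [conjTranspose_mul, (isHermitian_nullProj hΩ).eq, Matrix.mul_assoc B, Matrix.mul_assoc B,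
      ← Matrix.mul_assoc (nullProj Ω) (nullProj Ω), nullProj_mul_nullProj hΩ]
  have hD := isHermitian_schur hΩ hA B
  have hCΩ : B * nullProj Ω * Ω = 0 := by
    rw [Matrix.mul_assoc, nullProj_mul hΩ, Matrix.mul_zero]
  rw [gram_eq] at hV ⊢
  rw [rank_self_mul_conjTranspose,
    ← signature_fromBlocks_of_mul_eq_zero_of_range_eq_ker hΩ hD hCΩ hV]
  exact (formCongruent_fromBlocks_schur hΩ B A).signature_eq
    (hΩ.fromBlocks (conjTranspose_conjTranspose _) hD)

end BlockMatrices

theorem rank_add_card_of_range_eq_ker {m n : Type*} [Fintype m] [Fintype n] {G : Matrix n n ℂ}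
    {V : Matrix n m ℂ} (hV_inj : Function.Injective V.mulVec)
    (hV : LinearMap.range V.mulVecLin = LinearMap.ker G.mulVecLin) :
    G.rank + Fintype.card m = Fintype.card n := by
  have h_rank_nullity := LinearMap.finrank_range_add_finrank_ker G.mulVecLin
  rwa [← hV, LinearMap.finrank_range_of_inj (f := V.mulVecLin) hV_inj,
    Module.finrank_fintype_fun_eq_card, Module.finrank_fintype_fun_eq_card] at h_rank_nullity

theorem index_formulas_for_W_general {d N m : Type*} [Fintype d] [DecidableEq d] [Fintype N]
    [DecidableEq N] [Fintype m] [DecidableEq m]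
    (Ω : Matrix d d ℂ) (hΩ : Ω.IsHermitian) (A : Matrix N N ℂ) (hA : A.IsHermitian)
    (B : Matrix N d ℂ) (hker : ∀ x : N → ℂ, A *ᵥ x = 0 → Bᴴ *ᵥ x = 0)
    (W : Matrix d d ℂ) (hW : W = Ω - Bᴴ * pinvH A * B)
    (P : Matrix d d ℂ) (hP : P = nullProj Ω)
    (V : Matrix N m ℂ) (hV : Function.Injective V.mulVec)
    (hVrange : LinearMap.range V.mulVecLin = LinearMap.ker (B * P * Bᴴ).mulVecLin)
    (S : Matrix m m ℂ) (hS : S = Vᴴ * (A - B * pinvH Ω * Bᴴ) * V)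
    (iinf : ℕ) (hiinf : iinf = (B * P * Bᴴ).rank) :
    iinf = Fintype.card N - Fintype.card m ∧
    (iNeg W : ℤ) = iNeg Ω + iNeg S + iinf - iNeg A ∧
    (iZero W : ℤ) = iZero Ω + iZero S - iinf - iZero A ∧
    (iPos W : ℤ) = iPos Ω + iPos S + iinf - iPos A ∧
    (iPos W : ℤ) = iPos Ω - iNeg S - iZero S + iNeg A + iZero A := by
  have h_rank := rank_add_card_of_range_eq_ker hV hVrange
  subst hP
  have hW_sig := signature_fromBlocks_eq_add_schur hA hΩ hker
  have hS_sig := signature_fromBlocks_eq_add_compressed_schur hA hΩ hVrange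
  rw [← hW, hS_sig, ← hS, ← hiinf] at hW_sig
  simp only [signature, Prod.mk_add_mk, Prod.mk.injEq] at hW_sig
  obtain ⟨h_pos, h_neg⟩ := hW_sig
  have hW_herm : W.IsHermitian := by
    simpa only [conjTranspose_conjTranspose, hW] using isHermitian_schur hA hΩ Bᴴ
  have hS_herm : S.IsHermitian :=
    hS ▸ isHermitian_conjTranspose_mul_mul V (isHermitian_schur hΩ hA B)
  have hW_card := iPos_add_iNeg_add_iZero hW_herm
  have hΩ_card := iPos_add_iNeg_add_iZero hΩ
  have hA_card := iPos_add_iNeg_add_iZero hA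
  have hS_card := iPos_add_iNeg_add_iZero hS_herm
  omega

/-- Lemma 3.1 of the paper: index formulas for `W = Ω − B*A⁺B` in terms of the inertias
of `Ω`, `A` and of the compression `S` of `A − BΩ⁺B*` to `𝒬 = Null(BPB*)` (realized via
any matrix `V` whose columns form an orthonormal basis of `𝒬`), with
`i_∞(S) = rank(BPB*) = N − dim 𝒬`. -/
theorem index_formulas_for_W
    (d N m : ℕ)
    (Ω : Matrix (Fin d) (Fin d) ℂ) (hΩ : Ω.IsHermitian)
    (A : Matrix (Fin N) (Fin N) ℂ) (hA : A.IsHermitian)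
    (B : Matrix (Fin N) (Fin d) ℂ)
    (hker : ∀ x : Fin N → ℂ, A.mulVec x = 0 → Bᴴ.mulVec x = 0)
    (W : Matrix (Fin d) (Fin d) ℂ) (hW : W = Ω - Bᴴ * pinvH A * B)
    (P : Matrix (Fin d) (Fin d) ℂ) (hP : P = nullProj Ω)
    (V : Matrix (Fin N) (Fin m) ℂ) (hV : Vᴴ * V = 1)
    (hVrange : LinearMap.range V.mulVecLin = LinearMap.ker (B * P * Bᴴ).mulVecLin)
    (S : Matrix (Fin m) (Fin m) ℂ) (hS : S = Vᴴ * (A - B * pinvH Ω * Bᴴ) * V)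
    (iinf : ℕ) (hiinf : iinf = (B * P * Bᴴ).rank) :
    iinf = N - m ∧
    (iNeg W : ℤ) = iNeg Ω + iNeg S + iinf - iNeg A ∧
    (iZero W : ℤ) = iZero Ω + iZero S - iinf - iZero A ∧
    (iPos W : ℤ) = iPos Ω + iPos S + iinf - iPos A ∧
    (iPos W : ℤ) = iPos Ω - iNeg S - iZero S + iNeg A + iZero A := by
  have hV_inj : Function.Injective V.mulVec :=
    Function.LeftInverse.injective (g := Vᴴ.mulVec) fun x => by rw [mulVec_mulVec, hV, one_mulVec]
  simpa only [Fintype.card_fin] using index_formulas_for_W_general Ω hΩ A hA B hker W hW P hP V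
    hV_inj hVrange S hS iinf hiinf
end
end

section
/- Let W be a 3×3 Hermitian matrix with det W = 0. If the real part Re W (the entrywise real part, a real symmetric matrix) is positive definite, then W is positive semidefinite. -/
noncomputable section

open Matrix Complex
open scoped ComplexOrder

/-!
Let `x` be a nonzero vector. If `Re W` is positive definite, the Hermitian form of `W` cannot be
nonpositive at both `x` and its conjugate `star x`, because the two values add up to twice the value
of `Re W` at `x`. Annihilating the components of both `x` and `star x` along the `p` eigenvectors
with positive eigenvalue takes `2 * p` linear equations, so these have only the zero solution and
`2 * p` is at least the size of `W`. In size at most three this leaves at most one nonpositive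
eigenvalue; if it were negative, the determinant would be negative.
-/

theorem exists_ne_zero_mulVec_eq_zero_of_card_lt {K ι κ : Type*} [Field K] [Fintype ι] [Fintype κ]
    (A : Matrix ι κ K) (hcard : Fintype.card ι < Fintype.card κ) :
    ∃ x : κ → K, x ≠ 0 ∧ A *ᵥ x = 0 := by
  have hker : LinearMap.ker A.mulVecLin ≠ ⊥ :=
    LinearMap.ker_ne_bot_of_finrank_lt (by simpa only [Module.finrank_fintype_fun_eq_card])
  obtain ⟨x, hx, hx0⟩ := Submodule.exists_mem_ne_zero_of_ne_bot hker
  exact ⟨x, hx0, hx⟩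

section RCLike

variable {𝕜 m : Type*} [RCLike 𝕜] [Fintype m] {W : Matrix m m 𝕜}

theorem re_dotProduct_mulVec_add_re_dotProduct_mulVec_star (W : Matrix m m 𝕜) (x : m → 𝕜) :
    RCLike.re (star x ⬝ᵥ W *ᵥ x) + RCLike.re (x ⬝ᵥ W *ᵥ star x) =
      2 * ((RCLike.re ∘ x) ⬝ᵥ W.map RCLike.re *ᵥ (RCLike.re ∘ x) +
        (RCLike.im ∘ x) ⬝ᵥ W.map RCLike.re *ᵥ (RCLike.im ∘ x)) := by
  simp only [dotProduct, mulVec, Finset.mul_sum, map_sum, ← Finset.sum_add_distrib]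
  refine Finset.sum_congr rfl fun i _ => Finset.sum_congr rfl fun j _ => ?_
  simp only [Pi.star_apply, Function.comp_apply, map_apply, RCLike.star_def, RCLike.mul_re,
    RCLike.mul_im, RCLike.conj_re, RCLike.conj_im]
  ring

theorem re_dotProduct_mulVec_add_re_dotProduct_mulVec_star_pos
    (hre : (W.map RCLike.re).PosDef) {x : m → 𝕜} (hx : x ≠ 0) :
    0 < RCLike.re (star x ⬝ᵥ W *ᵥ x) + RCLike.re (x ⬝ᵥ W *ᵥ star x) := by
  rw [re_dotProduct_mulVec_add_re_dotProduct_mulVec_star]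
  have hnonneg (u : m → ℝ) : 0 ≤ u ⬝ᵥ W.map RCLike.re *ᵥ u :=
    hre.posSemidef.dotProduct_mulVec_nonneg u
  have hpos {u : m → ℝ} (hu : u ≠ 0) : 0 < u ⬝ᵥ W.map RCLike.re *ᵥ u :=
    hre.dotProduct_mulVec_pos hu
  refine mul_pos two_pos ?_
  by_cases hxre : RCLike.re ∘ x = 0
  · have hxim : RCLike.im ∘ x ≠ 0 := fun hxim =>
      hx <| funext fun i => RCLike.ext (by simpa using congrFun hxre i)
        (by simpa using congrFun hxim i)
    exact add_pos_of_nonneg_of_pos (hnonneg _) (hpos hxim)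
  · exact add_pos_of_pos_of_nonneg (hpos hxre) (hnonneg _)

variable [DecidableEq m]

theorem re_dotProduct_mulVec_eq_sum_eigenvalues (hW : W.IsHermitian) (x : m → 𝕜) :
    RCLike.re (star x ⬝ᵥ W *ᵥ x) =
      ∑ i, hW.eigenvalues i * ‖star ⇑(hW.eigenvectorBasis i) ⬝ᵥ x‖ ^ 2 := by
  set U := (hW.eigenvectorUnitary : Matrix m m 𝕜) with hU
  have hform : star x ⬝ᵥ W *ᵥ x =
      star (star U *ᵥ x) ⬝ᵥ diagonal (RCLike.ofReal ∘ hW.eigenvalues) *ᵥ (star U *ᵥ x) := by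
    conv_lhs => rw [hW.spectral_theorem, Unitary.conjStarAlgAut_apply]
    simp only [← mulVec_mulVec, star_mulVec, dotProduct_mulVec, star_eq_conjTranspose,
      conjTranspose_conjTranspose, ← hU]
  have hcoord (i : m) : (star U *ᵥ x) i = star ⇑(hW.eigenvectorBasis i) ⬝ᵥ x := rfl
  simp only [hform, ← hcoord]
  simp only [dotProduct, map_sum, mulVec_diagonal, Pi.star_apply, Function.comp_apply]
  refine Finset.sum_congr rfl fun i _ => ?_
  rw [mul_left_comm, RCLike.re_ofReal_mul, RCLike.star_def, RCLike.conj_mul, ← RCLike.ofReal_pow,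
    RCLike.ofReal_re]

theorem re_dotProduct_mulVec_nonpos_of_dotProduct_eigenvectorBasis_eq_zero (hW : W.IsHermitian)
    {x : m → 𝕜}
    (hx : ∀ i, 0 < hW.eigenvalues i → star ⇑(hW.eigenvectorBasis i) ⬝ᵥ x = 0) :
    RCLike.re (star x ⬝ᵥ W *ᵥ x) ≤ 0 := by
  rw [re_dotProduct_mulVec_eq_sum_eigenvalues hW]
  refine Finset.sum_nonpos fun i _ => ?_
  rcases lt_or_ge 0 (hW.eigenvalues i) with hpos | hnonpos
  · simp [hx i hpos]
  · exact mul_nonpos_of_nonpos_of_nonneg hnonpos (sq_nonneg _)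

theorem card_le_two_mul_card_pos_eigenvalues_of_re_posDef (hW : W.IsHermitian)
    (hre : (W.map RCLike.re).PosDef) :
    Fintype.card m ≤ 2 * Fintype.card {i // 0 < hW.eigenvalues i} := by
  by_contra! hlt
  let v (i : {i // 0 < hW.eigenvalues i}) : m → 𝕜 := ⇑(hW.eigenvectorBasis i)
  obtain ⟨x, hx0, hx⟩ := exists_ne_zero_mulVec_eq_zero_of_card_lt
    (fromRows (of fun i => star (v i)) (of v)) (by rwa [Fintype.card_sum, ← two_mul])
  have hform : RCLike.re (star x ⬝ᵥ W *ᵥ x) ≤ 0 :=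
    re_dotProduct_mulVec_nonpos_of_dotProduct_eigenvectorBasis_eq_zero hW
      fun i hi => congrFun hx (Sum.inl ⟨i, hi⟩)
  have hform_star : RCLike.re (star (star x) ⬝ᵥ W *ᵥ star x) ≤ 0 :=
    re_dotProduct_mulVec_nonpos_of_dotProduct_eigenvectorBasis_eq_zero hW fun i hi => by
      have hvx : v ⟨i, hi⟩ ⬝ᵥ x = 0 := congrFun hx (Sum.inr ⟨i, hi⟩)
      rw [star_dotProduct_star, dotProduct_comm, hvx, star_zero]
  rw [star_star] at hform_star
  exact (add_nonpos hform hform_star).not_gt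
    (re_dotProduct_mulVec_add_re_dotProduct_mulVec_star_pos hre hx0)

theorem eigenvalues_pos_of_ne_of_re_posDef (hcard : Fintype.card m ≤ 3) (hW : W.IsHermitian)
    (hre : (W.map RCLike.re).PosDef) {i j : m} (hi : hW.eigenvalues i ≤ 0) (hij : j ≠ i) :
    0 < hW.eigenvalues j := by
  by_contra! hj
  have htwo : 2 ≤ Fintype.card {k // ¬ 0 < hW.eigenvalues k} :=
    Fintype.one_lt_card_iff.mpr ⟨⟨i, hi.not_gt⟩, ⟨j, hj.not_gt⟩, by simpa using hij.symm⟩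
  have hcompl := Fintype.card_subtype_compl fun k => 0 < hW.eigenvalues k
  have hhalf := card_le_two_mul_card_pos_eigenvalues_of_re_posDef hW hre
  lia

theorem three_by_three_posSemidef_of_re_posDef_general (hcard : Fintype.card m ≤ 3)
    (hW : W.IsHermitian) (hdet : 0 ≤ W.det) (hre : (W.map RCLike.re).PosDef) :
    W.PosSemidef := by
  rw [hW.posSemidef_iff_eigenvalues_nonneg]
  intro i
  by_contra! hi
  have hothers : 0 < ∏ j ∈ Finset.univ.erase i, hW.eigenvalues j := Finset.prod_pos fun j hj =>
    eigenvalues_pos_of_ne_of_re_posDef hcard hW hre hi.le (Finset.ne_of_mem_erase hj)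
  have hprod : 0 ≤ ∏ j, hW.eigenvalues j := by
    rwa [hW.det_eq_prod_eigenvalues, ← RCLike.ofReal_prod, RCLike.ofReal_nonneg] at hdet
  rw [← Finset.mul_prod_erase _ _ (Finset.mem_univ i)] at hprod
  exact hprod.not_gt (mul_neg_of_neg_of_pos hi hothers)

end RCLike

/-- Lemma 4.7 of the paper: a `3×3` Hermitian matrix with zero determinant whose
entrywise real part is positive definite is positive semidefinite. -/
theorem three_by_three_posSemidef_of_re_posDef
    (W : Matrix (Fin 3) (Fin 3) ℂ) (hW : W.IsHermitian) (hdet : W.det = 0)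
    (hre : (W.map Complex.re).PosDef) :
    W.PosSemidef :=
  three_by_three_posSemidef_of_re_posDef_general (Fintype.card_fin 3).le hW hdet.ge hre
end
end
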